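/- Truncation Lemma, first step (truncating the tracked template): Let U_1 and U_2 be two TA templates with conjunctive guards, let Φ(1_2) be an IMTL formula over the first instance of U_2, and let Q ∈ {E, E_inf, E_fin} with corresponding cutoff c_2 = 2|U_2|+1 if Q = E, c_2 = 2 if Q = E_inf, c_2 = 1 if Q = E_fin. Then for all n_1, n_2 ≥ 1: (U_1,U_2)^{(n_1,n_2)} ⊨ Q Φ(1_2) if and only if (U_1,U_2)^{(n_1, min(n_2,c_2))} ⊨ Q Φ(1_2). (This follows from the Bounding Lemma by treating the parallel composition of the n_1 copies of U_1 as a single template.) -/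

import Mathlib

open scoped ENNReal NNReal

namespace PNTA

/-! ### Basic ingredients: comparisons and clock constraints -/

/-- Comparison operators `<, ≤, >, ≥, =`. -/
inductive Cmp : Type
  | lt | le | gt | ge | eq

/-- Evaluation of a comparison operator on nonnegative reals. -/
def Cmp.eval : Cmp → NNReal → NNReal → Prop
  | .lt, a, b => a < b
  | .le, a, b => a ≤ b
  | .gt, a, b => b < a
  | .ge, a, b => b ≤ a
  | .eq, a, b => a = b

/-- Clock constraints `TC(C)`: Boolean combinations of comparisons of clocks with
clocks or with nonnegative rational constants. -/
inductive ClockConstraint (C : Type) : Type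
  | tt
  | neg (g : ClockConstraint C)
  | disj (g₁ g₂ : ClockConstraint C)
  | cmpClock (op : Cmp) (c₁ c₂ : C)
  | cmpConst (op : Cmp) (c : C) (q : ℚ≥0)

/-- Satisfaction of a clock constraint by a clock valuation. -/
def ClockConstraint.sat {C : Type} (u : C → NNReal) : ClockConstraint C → Prop
  | .tt => True
  | .neg g => ¬ g.sat u
  | .disj g₁ g₂ => g₁.sat u ∨ g₂.sat u
  | .cmpClock op c₁ c₂ => op.eval (u c₁) (u c₂)
  | .cmpConst op c q => op.eval (u c) (q : NNReal)

/-! ### Parameterized networks of timed automata with conjunctive guards -/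

/-- A parameterized network of `k` timed automaton templates
`U_l = ⟨S_l, ŝ_l, C_l, Γ_l, τ_l, I_l⟩` with **conjunctive guards**.
A conjunctive guard assigns to every template `h` a set of states of `U_h`
(the disjunction `ŝ_h ∨ s_h¹ ∨ ⋯`), which must contain the initial state `ŝ_h`;
it is satisfied by a global state when every *other* instance of every template `h`
is in a state belonging to the corresponding set. -/
structure ConjPNTA (k : ℕ) : Type 1 where
  /-- states of each template -/
  State : Fin k → Type
  stateFintype : ∀ l, Fintype (State l)
  /-- initial state of each template -/
  init : ∀ l, State l
  /-- clock variables of each template -/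
  Clock : Fin k → Type
  clockFintype : ∀ l, Fintype (Clock l)
  /-- transitions `s —(g,r,γ)→ t`: source, clock constraint, reset set, conjunctive guard, target -/
  trans : ∀ l, Set (State l × ClockConstraint (Clock l) × Set (Clock l) ×
      ((h : Fin k) → Set (State h)) × State l)
  trans_finite : ∀ l, (trans l).Finite
  /-- guards are conjunctive: every disjunct contains the initial state -/
  guards_conj : ∀ l tr, tr ∈ trans l → ∀ h, init h ∈ tr.2.2.2.1 h
  /-- state invariants -/
  inv : ∀ l, State l → ClockConstraint (Clock l)
  inv_init : ∀ l, inv l (init l) = ClockConstraint.tt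

variable {k : ℕ}

/-- `|U_l|`: the number of states of template `l`. -/
def ConjPNTA.size (A : ConjPNTA k) (l : Fin k) : ℕ :=
  @Fintype.card (A.State l) (A.stateFintype l)

lemma ConjPNTA.size_pos (A : ConjPNTA k) (l : Fin k) : 0 < A.size l :=
  @Fintype.card_pos _ (A.stateFintype l) ⟨A.init l⟩

/-- A configuration of the PNTA `(U_1,…,U_k)^{(n_1,…,n_k)}`: each instance `U_l^i`
(`l < k`, `i < n_l`) has a current state and a clock valuation satisfying the
invariant of that state. -/
structure Config (A : ConjPNTA k) (n : Fin k → ℕ) : Type where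
  st : ∀ l, Fin (n l) → A.State l
  cl : ∀ l, Fin (n l) → A.Clock l → NNReal
  inv_sat : ∀ l i, (A.inv l (st l i)).sat (cl l i)

/-- The initial configuration: every instance in its initial state, all clocks `0`. -/
def initConfig (A : ConjPNTA k) (n : Fin k → ℕ) : Config A n where
  st := fun l _ => A.init l
  cl := fun _ _ _ => 0
  inv_sat := fun l _ => by rw [A.inv_init l]; exact trivial

/-- The global state of configuration `c` satisfies the conjunctive guard `γ`
from the point of view of instance `(l, i)`: every other instance is in one of
the allowed states. -/
def guardSat {A : ConjPNTA k} {n : Fin k → ℕ} (c : Config A n) (l : Fin k) (i : Fin (n l))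
    (γ : (h : Fin k) → Set (A.State h)) : Prop :=
  ∀ p : Σ h, Fin (n h), p ≠ ⟨l, i⟩ → c.st p.1 p.2 ∈ γ p.1

/-- Delay transition `c →d c'`: all clocks of all instances advance by `d`,
states are unchanged, and all invariants hold throughout the delay. -/
def DelayStep {A : ConjPNTA k} {n : Fin k → ℕ} (d : NNReal) (c c' : Config A n) : Prop :=
  c'.st = c.st ∧
  (∀ l i x, c'.cl l i x = c.cl l i x + d) ∧
  (∀ l i (d' : NNReal), d' ≤ d → (A.inv l (c.st l i)).sat fun x => c.cl l i x + d')

/-- Synchronization transition `c →γ c'`: exactly one instance `U_l^i` fires a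
transition `s —(g,r,γ)→ t` of `τ_l`; its current state is `s`, its clocks satisfy `g`,
the global state satisfies the conjunctive guard `γ`, its clocks in `r` are reset to 0,
and all other instances are unchanged. -/
def SyncStep {A : ConjPNTA k} {n : Fin k → ℕ} (c c' : Config A n) : Prop :=
  ∃ (l : Fin k) (i : Fin (n l)), ∃ tr ∈ A.trans l,
    tr.1 = c.st l i ∧
    tr.2.1.sat (c.cl l i) ∧
    guardSat c l i tr.2.2.2.1 ∧
    c'.st l i = tr.2.2.2.2 ∧
    (∀ x, (x ∈ tr.2.2.1 → c'.cl l i x = 0) ∧ (x ∉ tr.2.2.1 → c'.cl l i x = c.cl l i x)) ∧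
    (∀ p : Σ h, Fin (n h), p ≠ ⟨l, i⟩ → c'.st p.1 p.2 = c.st p.1 p.2 ∧ c'.cl p.1 p.2 = c.cl p.1 p.2)

/-- A step of a timed computation: a delay transition with positive delay
(time advances accordingly) or a synchronization transition (time unchanged). -/
def Step {A : ConjPNTA k} {n : Fin k → ℕ} (c c' : Config A n) (t t' : NNReal) : Prop :=
  (∃ d : NNReal, 0 < d ∧ DelayStep d c c' ∧ t' = t + d) ∨ (SyncStep c c' ∧ t' = t)

/-- A timed computation starting at configuration `c₀` at time `0`: a finite or
infinite sequence of configuration/time pairs (represented as a partial function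
on positions with downward closed domain) whose consecutive elements are related
by delay or synchronization transitions. -/
structure TimedComp (A : ConjPNTA k) (n : Fin k → ℕ) (c₀ : Config A n) : Type where
  seq : ℕ → Option (Config A n × NNReal)
  zero_def : seq 0 = some (c₀, 0)
  downward : ∀ v, (seq (v + 1)).isSome → (seq v).isSome
  step : ∀ v c t c' t', seq v = some (c, t) → seq (v + 1) = some (c', t') → Step c c' t t'

namespace TimedComp

variable {A : ConjPNTA k} {n : Fin k → ℕ} {c₀ : Config A n}

/-- An infinite timed computation. -/
def Infinite (x : TimedComp A n c₀) : Prop := ∀ v, (x.seq v).isSome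

/-- A (not necessarily maximal) finite timed computation. -/
def Finite (x : TimedComp A n c₀) : Prop := ∃ v, x.seq v = none

/-- A deadlocked timed computation: maximal finite, i.e. all transitions are
disabled at its final configuration. -/
def Deadlocked (x : TimedComp A n c₀) : Prop :=
  ∃ v c t, x.seq v = some (c, t) ∧ x.seq (v + 1) = none ∧
    ∀ c' : Config A n, ¬ ((∃ d : NNReal, 0 < d ∧ DelayStep d c c') ∨ SyncStep c c')

/-- The time stamp at position `v` (junk value `0` outside the domain). -/
def timeAt (x : TimedComp A n c₀) (v : ℕ) : NNReal := ((x.seq v).map Prod.snd).getD 0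

end TimedComp

/-! ### s-paths (continuous-time signals induced by timed computations) -/

/-- An s-path: a continuous-time signal of configurations, together with its
(possibly infinite) length. -/
structure SPath (A : ConjPNTA k) (n : Fin k → ℕ) : Type where
  len : ℝ≥0∞
  toFun : NNReal → Config A n

/-- The suffix `ρ⌊t` of an s-path. -/
noncomputable def SPath.suffix {A : ConjPNTA k} {n : Fin k → ℕ} (ρ : SPath A n) (t : NNReal) : SPath A n where
  len := ρ.len - (t : ℝ≥0∞)
  toFun := fun s => ρ.toFun (t + s)

/-- The timed computation `x` induces the s-path `ρ`: for every step of `x` from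
`(c_v,t_v)` to `(c_{v+1},t_{v+1})` and every time `s ∈ [t_v, t_{v+1})`, `ρ(s)` has
the states of `c_v` with clocks advanced by `s - t_v`; the length of `ρ` is the
supremum of the time stamps (for an infinite computation), resp. the final time
stamp (for a finite one, at which the final configuration persists). -/
def Induces {A : ConjPNTA k} {n : Fin k → ℕ} {c₀ : Config A n}
    (x : TimedComp A n c₀) (ρ : SPath A n) : Prop :=
  (∀ v c t c' t', x.seq v = some (c, t) → x.seq (v + 1) = some (c', t') →
    ∀ s : NNReal, t ≤ s → s < t' →
      (ρ.toFun s).st = c.st ∧ ∀ l i cx, (ρ.toFun s).cl l i cx = c.cl l i cx + (s - t)) ∧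
  (x.Infinite → ρ.len = ⨆ v, (x.timeAt v : ℝ≥0∞)) ∧
  (∀ v c t, x.seq v = some (c, t) → x.seq (v + 1) = none →
    ρ.len = (t : ℝ≥0∞) ∧ (ρ.toFun t).st = c.st ∧ ∀ l i cx, (ρ.toFun t).cl l i cx = c.cl l i cx)

/-- `tcomp(ρ)`: the set of timed computations (from `c₀`) inducing the s-path `ρ`. -/
def tcomp {A : ConjPNTA k} {n : Fin k → ℕ} (c₀ : Config A n) (ρ : SPath A n) :
    Set (TimedComp A n c₀) :=
  {x | Induces x ρ}

/-- `|ρ| = ω` : `ρ` is (induced by) an infinite timed computation from `c₀`. -/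
def SPath.IsInfiniteFrom {A : ConjPNTA k} {n : Fin k → ℕ} (c₀ : Config A n) (ρ : SPath A n) : Prop :=
  ∃ x : TimedComp A n c₀, Induces x ρ ∧ x.Infinite

/-- `|ρ| < ω` : `ρ` is induced by a finite timed computation from `c₀`. -/
def SPath.IsFiniteFrom {A : ConjPNTA k} {n : Fin k → ℕ} (c₀ : Config A n) (ρ : SPath A n) : Prop :=
  ∃ x : TimedComp A n c₀, Induces x ρ ∧ x.Finite

/-- `deadlock(ρ)` : `ρ` is induced by a deadlocked timed computation from `c₀`. -/
def SPath.IsDeadlockedFrom {A : ConjPNTA k} {n : Fin k → ℕ} (c₀ : Config A n) (ρ : SPath A n) : Prop :=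
  ∃ x : TimedComp A n c₀, Induces x ρ ∧ x.Deadlocked

/-! ### IMTL formulae and their continuous-time semantics -/

/-- IMTL path formulae over atomic propositions `α`: built from `⊤` and atoms by
Boolean operators (`∧`, `¬`) and time-constrained until `Φ U_{∼q} Ψ` with
`∼ ∈ {<,≤,>,≥,=}` and `q ∈ ℚ≥0`. -/
inductive IMTL (α : Type) : Type
  | tt
  | atom (a : α)
  | and (φ ψ : IMTL α)
  | not (φ : IMTL α)
  | untl (op : Cmp) (q : ℚ≥0) (φ ψ : IMTL α)

/-- Satisfaction of an IMTL path formula on an s-path, given a valuation of the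
atomic propositions on configurations. -/
def satIMTL {A : ConjPNTA k} {n : Fin k → ℕ} {α : Type} (val : α → Config A n → Prop) :
    IMTL α → SPath A n → Prop
  | .tt, _ => True
  | .atom a, ρ => val a (ρ.toFun 0)
  | .and φ ψ, ρ => satIMTL val φ ρ ∧ satIMTL val ψ ρ
  | .not φ, ρ => ¬ satIMTL val φ ρ
  | .untl op q φ ψ, ρ => ∃ t' : NNReal, (t' : ℝ≥0∞) ≤ ρ.len ∧ op.eval t' (q : NNReal) ∧
      satIMTL val ψ (ρ.suffix t') ∧ ∀ t : NNReal, t < t' → satIMTL val φ (ρ.suffix t)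

/-- The six path quantifiers `A, A_inf, A_fin, E, E_inf, E_fin`. -/
inductive PathQ : Type
  | A | Ainf | Afin | E | Einf | Efin

/-- `(U_1,…,U_k)^{(n_1,…,n_k)} ⊨ Q Φ` for a path quantifier `Q`: quantification over
the s-paths from the initial configuration that are infinite or deadlocked (`A`, `E`),
infinite (`A_inf`, `E_inf`), resp. finite (`A_fin`, `E_fin`). -/
def SatQ (A : ConjPNTA k) (n : Fin k → ℕ) {α : Type} (val : α → Config A n → Prop)
    (Q : PathQ) (Φ : IMTL α) : Prop :=
  match Q with
  | .A => ∀ ρ : SPath A n,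
      (ρ.IsInfiniteFrom (initConfig A n) ∨ ρ.IsDeadlockedFrom (initConfig A n)) → satIMTL val Φ ρ
  | .Ainf => ∀ ρ : SPath A n, ρ.IsInfiniteFrom (initConfig A n) → satIMTL val Φ ρ
  | .Afin => ∀ ρ : SPath A n, ρ.IsFiniteFrom (initConfig A n) → satIMTL val Φ ρ
  | .E => ∃ ρ : SPath A n,
      (ρ.IsInfiniteFrom (initConfig A n) ∨ ρ.IsDeadlockedFrom (initConfig A n)) ∧ satIMTL val Φ ρ
  | .Einf => ∃ ρ : SPath A n, ρ.IsInfiniteFrom (initConfig A n) ∧ satIMTL val Φ ρ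
  | .Efin => ∃ ρ : SPath A n, ρ.IsFiniteFrom (initConfig A n) ∧ satIMTL val Φ ρ

/-- Atomic propositions of the indexed formula `Φ(i_{l₁},…,i_{l_h})`: a quantified
slot `j < h` together with a state (= atomic proposition) of template `l_j`. -/
def Atoms (A : ConjPNTA k) {h : ℕ} (l : Fin h → Fin k) : Type :=
  Σ j : Fin h, A.State (l j)

/-- The valuation of the atoms, given an assignment `inst` of concrete instances to
the quantified slots: `p(l_j, i_{l_j})` holds iff instance `i_{l_j}` of template `l_j`
is in state `p`. -/
def atomVal (A : ConjPNTA k) (n : Fin k → ℕ) {h : ℕ} (l : Fin h → Fin k)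
    (inst : ∀ j : Fin h, Fin (n (l j))) : Atoms A l → Config A n → Prop :=
  fun a c => c.st (l a.1) (inst a.1) = a.2

/-- `(U_1,…,U_k)^{(n_1,…,n_k)} ⊨ ⋀_{i_{l₁},…,i_{l_h}} Q Φ(i_{l₁},…,i_{l_h})`. -/
def SatFormula (A : ConjPNTA k) (n : Fin k → ℕ) {h : ℕ} (l : Fin h → Fin k)
    (Q : PathQ) (Φ : IMTL (Atoms A l)) : Prop :=
  ∀ inst : ∀ j : Fin h, Fin (n (l j)), SatQ A n (atomVal A n l inst) Q Φ

/-! ### Helpers for networks of two templates -/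

/-- The size function of the system `(U₁,U₂)^{(a,b)}`. -/
def two (a b : ℕ) : Fin 2 → ℕ := fun m => if m.val = 0 then a else b

/-- The valuation interpreting the atoms of a formula `Φ(1_t)` over the *first*
instance of template `t`. -/
def valFirst (A : ConjPNTA 2) (n : Fin 2 → ℕ) (t : Fin 2) (hp : 0 < n t) :
    A.State t → Config A n → Prop :=
  fun p c => c.st t ⟨0, hp⟩ = p


/-! ### Cutoffs for two-template systems -/

/-- Cutoff for the template tracked by the formula `Φ(1₂)` (part (i)):
`2` for `E_inf`, `1` for `E_fin`, `2|U₂| + 1` for `E`. -/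
def cutoffTracked (A : ConjPNTA 2) : PathQ → ℕ
  | PathQ.Einf => 2
  | PathQ.Efin => 1
  | PathQ.E => 2 * A.size 1 + 1
  | _ => 1

/-- Cutoff for the untracked template (part (ii)):
`1` for `E_inf`, `1` for `E_fin`, `2|U₂|` for `E`. -/
def cutoffOther (A : ConjPNTA 2) : PathQ → ℕ
  | PathQ.Einf => 1
  | PathQ.Efin => 1
  | PathQ.E => 2 * A.size 1
  | _ => 1

lemma cutoffTracked_pos (A : ConjPNTA 2) (Q : PathQ) : 0 < cutoffTracked A Q := by
  have := A.size_pos 1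
  cases Q <;> simp only [cutoffTracked] <;> omega

lemma cutoffOther_pos (A : ConjPNTA 2) (Q : PathQ) : 0 < cutoffOther A Q := by
  have := A.size_pos 1
  cases Q <;> simp only [cutoffOther] <;> omega

/-! ### Stuttering, reindexings and local computations -/

/-- `y` is a *stuttering* of `x`: it is obtained from `x` by inserting, between
consecutive elements, finitely many intermediate observations of the same states
with clocks advanced by small delays `δ`, without altering the original elements.
The map `m` sends a position of `y` to the position of `x` it refines. -/
def Stuttering {A : ConjPNTA k} {n : Fin k → ℕ} {c₀ : Config A n}
    (y x : TimedComp A n c₀) : Prop :=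
  ∃ m : ℕ → ℕ, Monotone m ∧ m 0 = 0 ∧
    (∀ w, (y.seq w).isSome → (x.seq (m w)).isSome) ∧
    (∀ w, y.seq w = none → ∃ v, x.seq v = none) ∧
    (∀ v, Set.Finite {w | (y.seq w).isSome ∧ m w = v}) ∧
    (∀ v, (x.seq v).isSome → ∃ w, m w = v ∧ y.seq w = x.seq v) ∧
    (∀ w cy ty cx tx, y.seq w = some (cy, ty) → x.seq (m w) = some (cx, tx) →
      tx ≤ ty ∧ cy.st = cx.st ∧ (∀ l i cxk, cy.cl l i cxk = cx.cl l i cxk + (ty - tx)) ∧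
      ∀ cx' tx', x.seq (m w + 1) = some (cx', tx') → ty ≤ tx')

/-- A reindexing of positions between a timed computation `x` and a timed
computation `y` obtained from `x` by collapsing some steps. -/
def Reindex {A : ConjPNTA k} {n n' : Fin k → ℕ} {c₀ : Config A n} {c₀' : Config A n'}
    (x : TimedComp A n c₀) (y : TimedComp A n' c₀') (m : ℕ → ℕ) : Prop :=
  Monotone m ∧ m 0 = 0 ∧
    (∀ v, (x.seq v).isSome → (y.seq (m v)).isSome) ∧
    (∀ w, (y.seq w).isSome → ∃ v, (x.seq v).isSome ∧ m v = w)

/-- The local timed computation of instance `(l, iy)` of `y` coincides (through the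
reindexing `m`) with the local timed computation of instance `(l, ix)` of `x`:
same times, same states, same clock values. -/
def LocalMatch {A : ConjPNTA k} {n n' : Fin k → ℕ} {c₀ : Config A n} {c₀' : Config A n'}
    (x : TimedComp A n c₀) (y : TimedComp A n' c₀') (m : ℕ → ℕ)
    (l : Fin k) (ix : Fin (n l)) (iy : Fin (n' l)) : Prop :=
  ∀ v c t c' t', x.seq v = some (c, t) → y.seq (m v) = some (c', t') →
    t' = t ∧ c'.st l iy = c.st l ix ∧ c'.cl l iy = c.cl l ix

/-- Instance `(l, i)` of `y` follows the idle local computation: it stutters in the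
initial state `ŝ_l` with all its clocks equal to the elapsed time. -/
def IdleLocal {A : ConjPNTA k} {n : Fin k → ℕ} {c₀ : Config A n}
    (y : TimedComp A n c₀) (l : Fin k) (i : Fin (n l)) : Prop :=
  ∀ v c t, y.seq v = some (c, t) → c.st l i = A.init l ∧ ∀ cx, c.cl l i cx = t

/-- The local computation of instance `(l, i)` of `x` is infinite: the instance takes
infinitely many (observable) synchronization steps. -/
def LocalInfinite {A : ConjPNTA k} {n : Fin k → ℕ} {c₀ : Config A n}
    (x : TimedComp A n c₀) (l : Fin k) (i : Fin (n l)) : Prop :=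
  ∀ N, ∃ v, N ≤ v ∧ ∃ c t c' t', x.seq v = some (c, t) ∧ x.seq (v + 1) = some (c', t') ∧
    t' = t ∧ ¬ (c'.st l i = c.st l i ∧ c'.cl l i = c.cl l i)

lemma two_le_two_succ (n : ℕ) (l : Fin 2) : two 1 n l ≤ two 1 (n + 1) l := by
  unfold two; split <;> omega

lemma c2two (A : ConjPNTA 2) {c₂ : ℕ} (hc : c₂ = 2 ∨ c₂ = 2 * A.size 1 + 1) : 1 < c₂ := by
  have := A.size_pos 1
  rcases hc with h | h <;> omega

lemma c2pos (A : ConjPNTA 2) {c₂ : ℕ} (hc : c₂ = 2 ∨ c₂ = 2 * A.size 1 + 1) : 0 < c₂ :=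
  Nat.lt_of_lt_of_le Nat.one_pos (Nat.le_of_lt (c2two A hc))

lemma npos (A : ConjPNTA 2) {c₂ n : ℕ} (hc : c₂ = 2 ∨ c₂ = 2 * A.size 1 + 1) (hn : c₂ ≤ n) :
    0 < n := Nat.lt_of_lt_of_le (c2pos A hc) hn

/-!
Fix the set of instances to be retained. Forgetting the other instances maps every step of a
computation to a step or to no change at all, because a conjunctive guard only becomes weaker when
instances disappear. Conversely, a computation of the smaller network extends to the larger one by
instances that idle in their initial states, which no invariant forbids and every guard admits.
Both operations preserve the signal of the tracked instance, so only the kind of computation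
(infinite, deadlocked or finite) needs care.

* An infinite computation stays infinite if some instance that fires infinitely often is retained,
  unless there are infinitely many delays.
* A deadlock stays a deadlock if one instance whose invariant blocks time is retained, and every
  dropped instance has two retained instances in its state: whatever guard holds in the smaller
  network then holds in the larger one. Two instances per state suffice for both, since the
  blocking instance may be one of them.
* When idle instances are added to a deadlocked computation, they may fire, but only without delay;
  one continues until they are deadlocked as well, or forever.
-/

section Chains

variable {α : Type*} {r : α → α → Prop}

theorem exists_chain_of_reflTransGen {a b : α} (h : Relation.ReflTransGen r a b) :
    ∃ (z : ℕ → α) (N : ℕ), z 0 = a ∧ z N = b ∧ ∀ v < N, r (z v) (z (v + 1)) := by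
  induction h using Relation.ReflTransGen.head_induction_on with
  | refl => exact ⟨fun _ => b, 0, rfl, rfl, by simp⟩
  | @head a c hac _ ih =>
    obtain ⟨z, N, rfl, hN, hz⟩ := ih
    refine ⟨fun v => Nat.casesOn v a z, N + 1, rfl, hN, ?_⟩
    rintro (_ | v) hv
    · exact hac
    · exact hz v (by omega)

theorem exists_infinite_chain_of_reflTransGen {a : α} {z : ℕ → α}
    (h : Relation.ReflTransGen r a (z 0)) (hz : ∀ v, r (z v) (z (v + 1))) :
    ∃ (z' : ℕ → α) (m : ℕ), z' 0 = a ∧ (∀ v, r (z' v) (z' (v + 1))) ∧ ∀ v, z' (v + m) = z v := by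
  induction h using Relation.ReflTransGen.head_induction_on with
  | refl => exact ⟨z, 0, rfl, hz, fun _ => rfl⟩
  | @head a c hac _ ih =>
    obtain ⟨z', m, rfl, hz', hm⟩ := ih
    refine ⟨fun v => Nat.casesOn v a z', m + 1, rfl, ?_, hm⟩
    rintro (_ | v)
    · exact hac
    · exact hz' v

theorem exists_terminal_or_infinite_chain (r : α → α → Prop) (a : α) :
    (∃ b, Relation.ReflTransGen r a b ∧ ∀ c, ¬ r b c) ∨
      ∃ z : ℕ → α, z 0 = a ∧ ∀ v, r (z v) (z (v + 1)) := by
  by_cases ha : Acc (Function.swap r) a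
  · left
    induction ha with
    | intro a _ ih =>
      by_cases hterm : ∃ c, r a c
      · obtain ⟨c, hac⟩ := hterm
        obtain ⟨b, hcb, hb⟩ := ih c hac
        exact ⟨b, .head hac hcb, hb⟩
      · exact ⟨a, .refl, not_exists.1 hterm⟩
  · right
    rw [acc_iff_isEmpty_descending_chain, not_isEmpty_iff] at ha
    obtain ⟨z, hz⟩ := ha
    exact ⟨z, hz⟩

theorem apply_nth_of_stutter {z : ℕ → α} {P : ℕ → Prop} (hP : (Set.ofPred P).Infinite)
    (hz : ∀ v, ¬ P v → z (v + 1) = z v) :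
    z (Nat.nth P 0) = z 0 ∧ ∀ w, z (Nat.nth P (w + 1)) = z (Nat.nth P w + 1) := by
  have const_of_not : ∀ {a b : ℕ}, a ≤ b → (∀ v, a ≤ v → v < b → ¬ P v) → z b = z a := by
    intro a b hab
    induction b, hab using Nat.le_induction with
    | base => simp
    | succ b hab ih =>
      intro h
      rw [hz b (h b hab b.lt_succ_self), ih fun v hav hvb => h v hav (by omega)]
  refine ⟨const_of_not (Nat.zero_le _) fun v _ hv hPv => ?_, fun w => ?_⟩
  · rw [Nat.nth_zero] at hv
    exact hv.not_ge (Nat.sInf_le hPv)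
  · refine const_of_not (Nat.nth_strictMono hP w.lt_succ_self) fun v hwv hv hPv => ?_
    exact (Nat.le_nth_of_lt_nth_succ hv hPv).not_gt hwv

end Chains

open Finset in
theorem exists_superset_card_le_forall_le_card_fiber {ι S : Type*} [Finite ι] [Fintype S]
    [DecidableEq S] (σ : ι → S) {m : ℕ} {B : Finset ι}
    (hB : ∀ s, #{j ∈ B | σ j = s} ≤ m) :
    ∃ T, B ⊆ T ∧ #T ≤ m * Fintype.card S ∧ ∀ j ∉ T, m ≤ #{j' ∈ T | σ j' = σ j} := by
  classical
  have := Fintype.ofFinite ι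
  have fiber : ∀ s, ∃ T, {j ∈ B | σ j = s} ⊆ T ∧ T ⊆ ({j | σ j = s} : Finset ι) ∧
      #T = min m #{j | σ j = s} := fun s =>
    have hsub : {j ∈ B | σ j = s} ⊆ ({j | σ j = s} : Finset ι) :=
      filter_subset_filter _ (subset_univ B)
    exists_subsuperset_card_eq hsub (le_min (hB s) (card_le_card hsub)) (min_le_right _ _)
  choose T hBT hTσ hT using fiber
  refine ⟨univ.biUnion T, fun j hj => ?_, ?_, fun j hj => ?_⟩
  · exact mem_biUnion.2 ⟨σ j, mem_univ _, hBT _ (mem_filter.2 ⟨hj, rfl⟩)⟩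
  · rw [mul_comm]
    exact card_biUnion_le_card_mul _ _ _ fun s _ => hT s ▸ min_le_left _ _
  · have hjT : j ∉ T (σ j) := fun h => hj (mem_biUnion.2 ⟨_, mem_univ _, h⟩)
    have hlt : #(T (σ j)) < #{j' | σ j' = σ j} :=
      card_lt_card ((hTσ _).ssubset_of_ne fun h => hjT (h ▸ by simp))
    calc m ≤ #(T (σ j)) := by have := hT (σ j); omega
      _ ≤ _ := card_le_card fun j' hj' =>
        mem_filter.2 ⟨mem_biUnion.2 ⟨_, mem_univ _, hj'⟩, (mem_filter.1 (hTσ _ hj')).2⟩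

section InstanceEmbedding

/-- A choice of `n' h` of the `n h` instances of every template `h`, namely the instances that a
truncation to the sizes `n'` retains. -/
abbrev InstanceEmbedding (n' n : Fin k → ℕ) : Type := ∀ h, Fin (n' h) ↪ Fin (n h)

variable {n n' : Fin k → ℕ}

/-- An instance embedding as a single map on all instances of all templates. -/
def InstanceEmbedding.sigma (f : InstanceEmbedding n' n) : (Σ h, Fin (n' h)) ↪ Σ h, Fin (n h) :=
  .sigmaMap (.refl _) f

theorem InstanceEmbedding.forall_iff (f : InstanceEmbedding n' n)
    {P : ∀ h, Fin (n h) → Prop} :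
    (∀ h j, P h j) ↔ (∀ h i, P h (f h i)) ∧ ∀ h, ∀ j ∉ Set.range (f h), P h j := by
  refine ⟨fun H => ⟨fun h i => H h (f h i), fun h j _ => H h j⟩, fun H h j => ?_⟩
  by_cases hj : j ∈ Set.range (f h)
  · obtain ⟨i, rfl⟩ := hj
    exact H.1 h i
  · exact H.2 h j hj

open Finset in
theorem exists_embedding_subset_range {N N' : ℕ} (hN : N' ≤ N) {T : Finset (Fin N)}
    (hT : #T ≤ N') : ∃ g : Fin N' ↪ Fin N, ↑T ⊆ Set.range g := by
  obtain ⟨T', hTT', hcard⟩ := exists_superset_card_eq hT (hN.trans_eq (Fintype.card_fin N).symm)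
  exact ⟨(T'.orderEmbOfFin hcard).toEmbedding,
    (coe_subset.2 hTT').trans_eq (T'.range_orderEmbOfFin hcard).symm⟩

open Finset in
theorem exists_instanceEmbedding {l : Fin k} (i : Fin (n l)) (i' : Fin (n' l))
    (hle : ∀ h, n' h ≤ n h) {T : ∀ h, Finset (Fin (n h))}
    (hT : ∀ h, min (n h) (#(T h) + if h = l then 1 else 0) ≤ n' h) :
    ∃ f : InstanceEmbedding n' n, f l i' = i ∧ ∀ h, ↑(T h) ⊆ Set.range (f h) := by
  have subset_update : ∀ h, T h ⊆ Function.update T l (insert i (T l)) h := by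
    intro h
    obtain rfl | hne := eq_or_ne h l <;> simp [*]
  have exists_embedding : ∀ h, ∃ g : Fin (n' h) ↪ Fin (n h),
      ↑(Function.update T l (insert i (T l)) h) ⊆ Set.range g := by
    refine fun h => exists_embedding_subset_range (hle h) ((le_min ?_ ?_).trans (hT h))
    · exact card_finset_fin_le _
    · obtain rfl | hne := eq_or_ne h l
      · simpa using card_insert_le i (T h)
      · simp [hne]
  choose g hg using exists_embedding
  obtain ⟨a, ha⟩ : i ∈ Set.range (g l) := hg l (by simp)
  refine ⟨Function.update g l ((Equiv.swap i' a).toEmbedding.trans (g l)), by simp [ha], ?_⟩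
  intro h
  refine (coe_subset.2 (subset_update h)).trans ((hg h).trans_eq ?_)
  obtain rfl | hne := eq_or_ne h l
  · rw [Function.update_self]
    exact (EquivLike.range_comp _ (Equiv.swap i' a)).symm
  · rw [Function.update_of_ne hne]

end InstanceEmbedding

section Transitions

variable {A : ConjPNTA k} {n : Fin k → ℕ} {c c' : Config A n} {d : NNReal}

@[ext]
theorem Config.ext (hst : c.st = c'.st) (hcl : c.cl = c'.cl) : c = c' := by
  cases c
  cases c'
  congr

/-- `c'` has the states of `c`, and the clocks of `c` advanced by `d`: the part of `DelayStep`
that remains after the invariants are dropped, as used by s-paths. -/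
def Advances (d : NNReal) (c c' : Config A n) : Prop :=
  c'.st = c.st ∧ ∀ l i x, c'.cl l i x = c.cl l i x + d

/-- The type of the transitions `s —(g,r,γ)→ t` of template `l`. -/
abbrev ConjPNTA.Transition (A : ConjPNTA k) (l : Fin k) : Type :=
  A.State l × ClockConstraint (A.Clock l) × Set (A.Clock l) × ((h : Fin k) → Set (A.State h)) ×
    A.State l

/-- Instance `i` of template `l` can fire `tr` in `c`, and doing so leads to `c'`. -/
def Fires (l : Fin k) (i : Fin (n l)) (tr : A.Transition l) (c c' : Config A n) : Prop :=
  tr.1 = c.st l i ∧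
  tr.2.1.sat (c.cl l i) ∧
  guardSat c l i tr.2.2.2.1 ∧
  c'.st l i = tr.2.2.2.2 ∧
  (∀ x, (x ∈ tr.2.2.1 → c'.cl l i x = 0) ∧ (x ∉ tr.2.2.1 → c'.cl l i x = c.cl l i x)) ∧
  (∀ p : Σ h, Fin (n h), p ≠ ⟨l, i⟩ → c'.st p.1 p.2 = c.st p.1 p.2 ∧ c'.cl p.1 p.2 = c.cl p.1 p.2)

theorem syncStep_iff_exists_fires :
    SyncStep c c' ↔ ∃ (l : Fin k) (i : Fin (n l)), ∃ tr ∈ A.trans l, Fires l i tr c c' :=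
  Iff.rfl

end Transitions

section RestrictOverlay

variable {A : ConjPNTA k} {n n' : Fin k → ℕ} {f : InstanceEmbedding n' n}

/-- The configuration of the truncated network that keeps only the instances retained by `f`. -/
def Config.restrict (f : InstanceEmbedding n' n) (c : Config A n) : Config A n' where
  st h j := c.st h (f h j)
  cl h j := c.cl h (f h j)
  inv_sat h j := c.inv_sat h (f h j)

/-- The configuration in which the instances retained by `f` are as in `a` and the dropped ones
as in `b`. -/
noncomputable def Config.overlay (f : InstanceEmbedding n' n) (a : Config A n')
    (b : Config A n) : Config A n where
  st h := Function.extend (f h) (a.st h) (b.st h)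
  cl h := Function.extend (f h) (a.cl h) (b.cl h)
  inv_sat h j := by
    by_cases hj : j ∈ Set.range (f h)
    · obtain ⟨i, rfl⟩ := hj
      simpa only [(f h).injective.extend_apply] using a.inv_sat h i
    · simpa only [Function.extend_apply' _ _ _ hj] using b.inv_sat h j

/-- All instances wait in their initial states up to time `t`. -/
def Config.idle (A : ConjPNTA k) (n : Fin k → ℕ) (t : NNReal) : Config A n where
  st h _ := A.init h
  cl _ _ _ := t
  inv_sat h _ := by rw [A.inv_init h]; exact trivial

namespace Config

variable {a : Config A n'} {b c : Config A n} {h : Fin k}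

theorem overlay_st_apply (i : Fin (n' h)) : (overlay f a b).st h (f h i) = a.st h i :=
  (f h).injective.extend_apply ..

theorem overlay_cl_apply (i : Fin (n' h)) : (overlay f a b).cl h (f h i) = a.cl h i :=
  (f h).injective.extend_apply ..

theorem overlay_st_of_notMem {j : Fin (n h)} (hj : j ∉ Set.range (f h)) :
    (overlay f a b).st h j = b.st h j :=
  Function.extend_apply' _ _ _ hj

theorem overlay_cl_of_notMem {j : Fin (n h)} (hj : j ∉ Set.range (f h)) :
    (overlay f a b).cl h j = b.cl h j :=
  Function.extend_apply' _ _ _ hj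

theorem restrict_overlay : restrict f (overlay f a b) = a :=
  Config.ext (funext₂ fun _ _ => overlay_st_apply _) (funext₂ fun _ _ => overlay_cl_apply _)

theorem overlay_restrict_self : overlay f (restrict f c) c = c :=
  Config.ext
    (funext₂ (f.forall_iff.2 ⟨fun _ => overlay_st_apply, fun _ _ => overlay_st_of_notMem⟩))
    (funext₂ (f.forall_iff.2 ⟨fun _ => overlay_cl_apply, fun _ _ => overlay_cl_of_notMem⟩))

theorem overlay_init_idle_zero : overlay f (initConfig A n') (idle A n 0) = initConfig A n :=
  overlay_restrict_self (c := initConfig A n)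

end Config

open Config

variable {a a' : Config A n'} {b b' c c' : Config A n} {d t t' : NNReal} {l : Fin k}

theorem Advances.restrict (H : Advances d c c') : Advances d (restrict f c) (restrict f c') :=
  ⟨funext₂ fun h i => congrFun₂ H.1 h (f h i), fun h i => H.2 h (f h i)⟩

theorem Advances.overlay (Ha : Advances d a a') (Hb : Advances d b b') :
    Advances d (overlay f a b) (overlay f a' b') := by
  constructor
  · refine funext₂ (f.forall_iff.2 ⟨fun h i => ?_, fun h j hj => ?_⟩)
    · rw [overlay_st_apply, overlay_st_apply, Ha.1]
    · rw [overlay_st_of_notMem hj, overlay_st_of_notMem hj, Hb.1]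
  · refine f.forall_iff.2 ⟨fun h i => ?_, fun h j hj => ?_⟩
    · rw [overlay_cl_apply, overlay_cl_apply]
      exact Ha.2 h i
    · rw [overlay_cl_of_notMem hj, overlay_cl_of_notMem hj]
      exact Hb.2 h j

theorem advances_idle : Advances d (idle A n t) (idle A n (t + d)) :=
  ⟨rfl, fun _ _ _ => rfl⟩

theorem DelayStep.advances (H : DelayStep d c c') : Advances d c c' :=
  ⟨H.1, H.2.1⟩

theorem DelayStep.restrict (H : DelayStep d c c') : DelayStep d (restrict f c) (restrict f c') :=
  have ⟨hst, hcl⟩ := H.advances.restrict (f := f)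
  ⟨hst, hcl, fun h i => H.2.2 h (f h i)⟩

theorem DelayStep.overlay_idle (H : DelayStep d a a') :
    DelayStep d (overlay f a (idle A n t)) (overlay f a' (idle A n (t + d))) := by
  obtain ⟨hst, hcl⟩ := H.advances.overlay (f := f) (advances_idle (t := t))
  refine ⟨hst, hcl, f.forall_iff.2 ⟨fun h i => ?_, fun h j hj => ?_⟩⟩
  · simpa only [overlay_st_apply, overlay_cl_apply] using H.2.2 h i
  · intro d' _
    rw [overlay_st_of_notMem hj, idle, A.inv_init h]
    trivial

variable {tr : A.Transition l}

theorem Fires.restrict {i : Fin (n' l)} (H : Fires l (f l i) tr c c') :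
    Fires l i tr (restrict f c) (restrict f c') :=
  have ⟨hsrc, hsat, hguard, htgt, hreset, hframe⟩ := H
  ⟨hsrc, hsat, fun p hp => hguard (f.sigma p) (f.sigma.injective.ne hp), htgt, hreset,
    fun p hp => hframe (f.sigma p) (f.sigma.injective.ne hp)⟩

theorem Fires.restrict_eq {j : Fin (n l)} (H : Fires l j tr c c') (hj : j ∉ Set.range (f l)) :
    Config.restrict f c' = Config.restrict f c := by
  have hne : ∀ p, f.sigma p ≠ ⟨l, j⟩ := by
    rintro ⟨h, i⟩ hp
    cases hp
    exact hj ⟨i, rfl⟩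
  have hframe := fun p => H.2.2.2.2.2 (f.sigma p) (hne p)
  exact Config.ext (funext₂ fun h i => (hframe ⟨h, i⟩).1) (funext₂ fun h i => (hframe ⟨h, i⟩).2)

theorem Fires.overlay {i : Fin (n' l)} (H : Fires l i tr a a')
    (hb : ∀ h, ∀ j ∉ Set.range (f h), b.st h j ∈ tr.2.2.2.1 h) :
    Fires l (f l i) tr (overlay f a b) (overlay f a' b) := by
  obtain ⟨hsrc, hsat, hguard, htgt, hreset, hframe⟩ := H
  have hne : ∀ {h i'}, (⟨h, f h i'⟩ : Σ h, Fin (n h)) ≠ ⟨l, f l i⟩ →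
      (⟨h, i'⟩ : Σ h, Fin (n' h)) ≠ ⟨l, i⟩ := by
    rintro h i' hp hi
    exact hp (congrArg f.sigma hi)
  simp only [Fires, overlay_st_apply, overlay_cl_apply]
  refine ⟨hsrc, hsat, ?_, htgt, hreset, ?_⟩
  · refine Sigma.forall.2 (f.forall_iff.2 ⟨fun h i' hp => ?_, fun h j hj _ => ?_⟩)
    · simpa only [overlay_st_apply] using hguard ⟨h, i'⟩ (hne hp)
    · simpa only [overlay_st_of_notMem hj] using hb h j hj
  · refine Sigma.forall.2 (f.forall_iff.2 ⟨fun h i' hp => ?_, fun h j hj _ => ?_⟩)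
    · simpa only [overlay_st_apply, overlay_cl_apply] using hframe ⟨h, i'⟩ (hne hp)
    · simp only [overlay_st_of_notMem hj, overlay_cl_of_notMem hj, and_self]

theorem SyncStep.restrict_or_eq (f : InstanceEmbedding n' n) (H : SyncStep c c') :
    SyncStep (restrict f c) (restrict f c') ∨ restrict f c' = restrict f c := by
  obtain ⟨l, j, tr, htr, hfires⟩ := syncStep_iff_exists_fires.1 H
  by_cases hj : j ∈ Set.range (f l)
  · obtain ⟨i, rfl⟩ := hj
    exact .inl ⟨l, i, tr, htr, hfires.restrict⟩
  · exact .inr (hfires.restrict_eq hj)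

theorem Step.restrict_or_eq (f : InstanceEmbedding n' n) (H : Step c c' t t') :
    Step (restrict f c) (restrict f c') t t' ∨ restrict f c' = restrict f c ∧ t' = t := by
  obtain ⟨d, hd, hdelay, ht⟩ | ⟨hsync, ht⟩ := H
  · exact .inl (.inl ⟨d, hd, hdelay.restrict, ht⟩)
  · exact (hsync.restrict_or_eq f).imp (fun h => .inr ⟨h, ht⟩) (fun h => ⟨h, ht⟩)

theorem Step.exists_mover (H : Step c c' t t') :
    ∃ o : Option (Σ h, Fin (n h)), ∀ {n'} (f : InstanceEmbedding n' n),
      (∀ h j, o = some ⟨h, j⟩ → j ∈ Set.range (f h)) →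
        Step (Config.restrict f c) (Config.restrict f c') t t' := by
  obtain ⟨d, hd, hdelay, ht⟩ | ⟨hsync, ht⟩ := H
  · exact ⟨none, fun f _ => .inl ⟨d, hd, hdelay.restrict, ht⟩⟩
  · obtain ⟨l, j, tr, htr, hfires⟩ := syncStep_iff_exists_fires.1 hsync
    refine ⟨some ⟨l, j⟩, fun f hf => ?_⟩
    obtain ⟨i, rfl⟩ := hf l j rfl
    exact .inr ⟨⟨l, i, tr, htr, hfires.restrict⟩, ht⟩

theorem SyncStep.overlay_idle (H : SyncStep a a') :
    SyncStep (overlay f a (idle A n t)) (overlay f a' (idle A n t)) := by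
  obtain ⟨l, i, tr, htr, hfires⟩ := syncStep_iff_exists_fires.1 H
  exact ⟨l, f l i, tr, htr, hfires.overlay fun h _ _ => A.guards_conj l tr htr h⟩

theorem Step.overlay_idle (H : Step a a' t t') :
    Step (overlay f a (idle A n t)) (overlay f a' (idle A n t')) t t' := by
  obtain ⟨d, hd, hdelay, rfl⟩ | ⟨hsync, rfl⟩ := H
  · exact .inl ⟨d, hd, hdelay.overlay_idle, rfl⟩
  · exact .inr ⟨hsync.overlay_idle, rfl⟩

end RestrictOverlay

section Deadlock

variable {A : ConjPNTA k} {n n' : Fin k → ℕ} {f : InstanceEmbedding n' n} {c c' : Config A n}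

/-- No transition is enabled in `c`. -/
def Stuck (c : Config A n) : Prop :=
  ∀ c', ¬ ((∃ d, 0 < d ∧ DelayStep d c c') ∨ SyncStep c c')

/-- The invariant of instance `j` of template `h` admits no positive delay in `c`. -/
def BlocksTime (c : Config A n) (h : Fin k) (j : Fin (n h)) : Prop :=
  ∀ d > 0, ∃ d' ≤ d, ¬ (A.inv h (c.st h j)).sat fun x => c.cl h j x + d'

open Filter Topology in
theorem Stuck.exists_blocksTime (hc : Stuck c) : ∃ h j, BlocksTime c h j := by
  by_contra! hfree
  have eventually_sat : ∀ h j, ∀ᶠ d : NNReal in 𝓝[>] 0,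
      ∀ d' ≤ d, (A.inv h (c.st h j)).sat fun x => c.cl h j x + d' := by
    intro h j
    obtain ⟨d, hd, hsat⟩ :
        ∃ d > 0, ∀ d' ≤ d, (A.inv h (c.st h j)).sat fun x => c.cl h j x + d' := by
      simpa [BlocksTime] using hfree h j
    filter_upwards [Ioc_mem_nhdsGT hd] with e he d' hd' using hsat d' (hd'.trans he.2)
  obtain ⟨d, hsat, hd⟩ := ((eventually_all.2 fun h => eventually_all.2 (eventually_sat h)).and
    self_mem_nhdsWithin).exists
  let c' : Config A n := ⟨c.st, fun h j x => c.cl h j x + d, fun h j => hsat h j d le_rfl⟩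
  exact hc c' (.inl ⟨d, hd, rfl, fun _ _ _ => rfl, hsat⟩)

-- One of the two twins of a dropped instance differs from the firing instance, and hence vouches
-- for the dropped instance in the guard.
theorem Stuck.restrict (hc : Stuck c) {h₀ : Fin k} {i₀ : Fin (n' h₀)}
    (hblock : BlocksTime c h₀ (f h₀ i₀))
    (htwins : ∀ h, ∀ j ∉ Set.range (f h), ∃ i₁ i₂, i₁ ≠ i₂ ∧
      c.st h (f h i₁) = c.st h j ∧ c.st h (f h i₂) = c.st h j) :
    Stuck (c.restrict f) := by
  rintro a (⟨d, hd, hdelay⟩ | hsync)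
  · obtain ⟨d', hd', hnot⟩ := hblock d hd
    exact hnot (hdelay.2.2 h₀ i₀ d' hd')
  · obtain ⟨l, i, tr, htr, hfires⟩ := syncStep_iff_exists_fires.1 hsync
    have guard_dropped : ∀ h, ∀ j ∉ Set.range (f h), c.st h j ∈ tr.2.2.2.1 h := by
      intro h j hj
      obtain ⟨i₁, i₂, hne, h₁, h₂⟩ := htwins h j hj
      by_cases hi₁ : (⟨h, i₁⟩ : Σ h, Fin (n' h)) = ⟨l, i⟩
      · have hi₂ : (⟨h, i₂⟩ : Σ h, Fin (n' h)) ≠ ⟨l, i⟩ := by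
          rintro hi₂
          exact hne (by simpa using hi₁.trans hi₂.symm)
        exact h₂ ▸ hfires.2.2.1 ⟨h, i₂⟩ hi₂
      · exact h₁ ▸ hfires.2.2.1 ⟨h, i₁⟩ hi₁
    have hfires' := hfires.overlay guard_dropped
    rw [Config.overlay_restrict_self] at hfires'
    exact hc _ (.inr ⟨l, f l i, tr, htr, hfires'⟩)

open Finset in
theorem Stuck.exists_finset_restrict (hc : Stuck c) :
    ∃ T : ∀ h, Finset (Fin (n h)), (∀ h, #(T h) ≤ 2 * A.size h) ∧
      ∀ {n'} (f : InstanceEmbedding n' n), (∀ h, ↑(T h) ⊆ Set.range (f h)) →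
        Stuck (c.restrict f) := by
  classical
  obtain ⟨h₀, j₀, hblock⟩ := hc.exists_blocksTime
  have exists_twins : ∀ h, ∃ T : Finset (Fin (n h)),
      ({j | (⟨h, j⟩ : Σ h, Fin (n h)) = ⟨h₀, j₀⟩} : Finset _) ⊆ T ∧ #T ≤ 2 * A.size h ∧
        ∀ j ∉ T, 2 ≤ #{j' ∈ T | c.st h j' = c.st h j} := by
    intro h
    let _ := A.stateFintype h
    refine exists_superset_card_le_forall_le_card_fiber (c.st h) fun s => ?_
    refine (card_le_one.2 fun j hj j' hj' => ?_).trans one_le_two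
    simp only [mem_filter, mem_univ, true_and] at hj hj'
    simpa using hj.1.trans hj'.1.symm
  choose T hblockT hcard htwins using exists_twins
  refine ⟨T, hcard, fun {n'} f hf => ?_⟩
  obtain ⟨i₀, rfl⟩ : j₀ ∈ Set.range (f h₀) := hf h₀ (hblockT h₀ (by simp))
  refine hc.restrict hblock fun h j hj => ?_
  obtain ⟨j₁, hj₁, j₂, hj₂, hne⟩ := one_lt_card.1 (htwins h j fun hjT => hj (hf h hjT))
  rw [mem_filter] at hj₁ hj₂
  obtain ⟨i₁, rfl⟩ := hf h hj₁.1
  obtain ⟨i₂, rfl⟩ := hf h hj₂.1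
  exact ⟨i₁, i₂, ne_of_apply_ne _ hne, hj₁.2, hj₂.2⟩

theorem Stuck.restrict_eq_of_syncStep (hc : Stuck (c.restrict f)) (h : SyncStep c c') :
    c'.restrict f = c.restrict f :=
  (h.restrict_or_eq f).resolve_left fun h' => hc _ (.inr h')

theorem Stuck.of_restrict (hc : Stuck (c.restrict f)) (hsync : ∀ c', ¬ SyncStep c c') :
    Stuck c := by
  rintro c' (⟨d, hd, hdelay⟩ | h)
  · exact hc _ (.inl ⟨d, hd, hdelay.restrict⟩)
  · exact hsync c' h

end Deadlock

section Runs

variable {A : ConjPNTA k} {n : Fin k → ℕ} {c₀ c c' : Config A n} {t t' : NNReal}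
  {p q : Config A n × NNReal} {g g' : NNReal → Config A n} {ρ : SPath A n}

/-- A step of a timed computation that takes place along the signal `g`. It relates pairs of a
configuration and a time stamp, so that timed computations become chains. -/
def StepAlong (g : NNReal → Config A n) (p q : Config A n × NNReal) : Prop :=
  Step p.1 q.1 p.2 q.2 ∧ ∀ s, p.2 ≤ s → s < q.2 → Advances (s - p.2) p.1 (g s)

/-- `ρ` is the signal of a finite timed computation from `c₀` whose final time is `t`. -/
def SPath.EndsAt (c₀ : Config A n) (ρ : SPath A n) (t : NNReal) : Prop :=
  ρ.len = t ∧ Relation.ReflTransGen (StepAlong ρ.toFun) (c₀, 0) (ρ.toFun t, t)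

theorem Step.time_le (h : Step c c' t t') : t ≤ t' := by
  obtain ⟨d, _, _, rfl⟩ | ⟨_, rfl⟩ := h
  · exact le_self_add
  · exact le_rfl

theorem SyncStep.stepAlong (h : SyncStep c c') : StepAlong g (c, t) (c', t) :=
  ⟨.inr ⟨h, rfl⟩, fun _ hts hst => absurd hst hts.not_gt⟩

theorem reflTransGen_stepAlong_congr (h : Relation.ReflTransGen (StepAlong g) p q)
    (hgg' : ∀ s < q.2, g' s = g s) : Relation.ReflTransGen (StepAlong g') p q := by
  induction h with
  | refl => exact .refl
  | tail _ hstep ih =>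
    refine (ih fun s hs => hgg' s (hs.trans_le hstep.1.time_le)).tail ⟨hstep.1, fun s hs hs' => ?_⟩
    rw [hgg' s hs']
    exact hstep.2 s hs hs'

theorem TimedComp.reflTransGen_stepAlong {x : TimedComp A n c₀} (hx : Induces x ρ) :
    ∀ {v p}, x.seq v = some p → Relation.ReflTransGen (StepAlong ρ.toFun) (c₀, 0) p
  | 0, p, h => by
    obtain rfl : (c₀, 0) = p := Option.some.inj (x.zero_def.symm.trans h)
    exact .refl
  | v + 1, p, h => by
    obtain ⟨q, hq⟩ := Option.isSome_iff_exists.1 (x.downward v (by simp [h]))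
    exact (reflTransGen_stepAlong hx hq).tail ⟨x.step v _ _ _ _ hq h, hx.1 v _ _ _ _ hq h⟩

theorem TimedComp.Finite.exists_last {x : TimedComp A n c₀} (hx : x.Finite) :
    ∃ N c t, x.seq N = some (c, t) ∧ x.seq (N + 1) = none := by
  by_contra! hsucc
  have isSome : ∀ v, (x.seq v).isSome := by
    intro v
    induction v with
    | zero => simp [x.zero_def]
    | succ v ih =>
      obtain ⟨q, hq⟩ := Option.isSome_iff_exists.1 ih
      exact Option.isSome_iff_ne_none.2 (hsucc v _ _ hq)
  obtain ⟨v, hv⟩ := hx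
  simpa [hv] using isSome v

theorem exists_timedComp_seq_eq_ite {z : ℕ → Config A n × NNReal} {N : ℕ} (h0 : z 0 = (c₀, 0))
    (hz : ∀ v < N, Step (z v).1 (z (v + 1)).1 (z v).2 (z (v + 1)).2) :
    ∃ x : TimedComp A n c₀, ∀ v, x.seq v = if v ≤ N then some (z v) else none :=
  ⟨{  seq v := if v ≤ N then some (z v) else none
      zero_def := by simp [h0]
      downward v := by grind
      step v c t c' t' hv hv' := by
        simp only [Option.ite_none_right_eq_some, Option.some.injEq] at hv hv'
        simpa only [hv.2, hv'.2] using hz v hv'.1 }, fun _ => rfl⟩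

theorem exists_induces_last_iff :
    (∃ x : TimedComp A n c₀, Induces x ρ ∧ ∃ N, x.seq N = some (c, t) ∧ x.seq (N + 1) = none) ↔
      ρ.EndsAt c₀ t ∧ ρ.toFun t = c := by
  constructor
  · rintro ⟨x, hx, N, hN, hN'⟩
    obtain ⟨hlen, hst, hcl⟩ := hx.2.2 N c t hN hN'
    obtain rfl : ρ.toFun t = c := Config.ext hst (funext₃ hcl)
    exact ⟨⟨hlen, x.reflTransGen_stepAlong hx hN⟩, rfl⟩
  · rintro ⟨⟨hlen, hrun⟩, rfl⟩
    obtain ⟨z, N, h0, hN, hz⟩ := exists_chain_of_reflTransGen hrun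
    obtain ⟨x, hx⟩ := exists_timedComp_seq_eq_ite h0 fun v hv => (hz v hv).1
    have seq_eq_some : ∀ {v p}, x.seq v = some p → v ≤ N ∧ z v = p := by simp [hx]
    refine ⟨x, ⟨fun v c t c' t' hv hv' => ?_, fun hinf => ?_, fun v c t' hv hv' => ?_⟩, N, ?_, ?_⟩
    · obtain ⟨hvN, hv'⟩ := seq_eq_some hv'
      have hstep := hz v hvN
      rw [(seq_eq_some hv).2, hv'] at hstep
      exact hstep.2
    · simpa [hx] using hinf (N + 1)
    · obtain ⟨hvN, hv⟩ := seq_eq_some hv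
      obtain rfl : v = N := hvN.antisymm (by simpa [hx, Nat.lt_succ_iff] using hv')
      obtain ⟨rfl, rfl⟩ := Prod.mk.inj (hN.symm.trans hv)
      exact ⟨hlen, rfl, fun _ _ _ => rfl⟩
    · simp [hx, hN]
    · simp [hx]

theorem SPath.isFiniteFrom_iff : ρ.IsFiniteFrom c₀ ↔ ∃ t, ρ.EndsAt c₀ t := by
  constructor
  · rintro ⟨x, hx, hfin⟩
    obtain ⟨N, c, t, hN⟩ := hfin.exists_last
    exact ⟨t, (exists_induces_last_iff.1 ⟨x, hx, N, hN⟩).1⟩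
  · rintro ⟨t, ht⟩
    obtain ⟨x, hx, N, -, hN⟩ := exists_induces_last_iff.2 ⟨ht, rfl⟩
    exact ⟨x, hx, N + 1, hN⟩

theorem SPath.isDeadlockedFrom_iff :
    ρ.IsDeadlockedFrom c₀ ↔ ∃ t, ρ.EndsAt c₀ t ∧ Stuck (ρ.toFun t) := by
  constructor
  · rintro ⟨x, hx, N, c, t, hN, hN', hstuck⟩
    obtain ⟨hends, rfl⟩ := exists_induces_last_iff.1 ⟨x, hx, N, hN, hN'⟩
    exact ⟨t, hends, hstuck⟩
  · rintro ⟨t, ht, hstuck⟩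
    obtain ⟨x, hx, N, hN, hN'⟩ := exists_induces_last_iff.2 ⟨ht, rfl⟩
    exact ⟨x, hx, N, _, t, hN, hN', hstuck⟩

theorem SPath.isInfiniteFrom_iff :
    ρ.IsInfiniteFrom c₀ ↔ ∃ z : ℕ → Config A n × NNReal, z 0 = (c₀, 0) ∧
      (∀ v, StepAlong ρ.toFun (z v) (z (v + 1))) ∧ ρ.len = ⨆ v, ((z v).2 : ℝ≥0∞) := by
  constructor
  · rintro ⟨x, hx, hinf⟩
    choose z hz using fun v => Option.isSome_iff_exists.1 (hinf v)
    refine ⟨z, Option.some.inj ((hz 0).symm.trans x.zero_def), fun v => ?_, ?_⟩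
    · exact ⟨x.step v _ _ _ _ (hz v) (hz (v + 1)), hx.1 v _ _ _ _ (hz v) (hz (v + 1))⟩
    · have timeAt_eq : ∀ v, x.timeAt v = (z v).2 := fun v => by rw [TimedComp.timeAt, hz]; rfl
      simpa only [timeAt_eq] using hx.2.1 hinf
  · rintro ⟨z, h0, hz, hlen⟩
    let x : TimedComp A n c₀ :=
      { seq v := some (z v)
        zero_def := congrArg some h0
        downward _ := id
        step := by
          rintro v c t c' t' hv hv'
          simpa only [Option.some.inj hv, Option.some.inj hv'] using (hz v).1 }
    refine ⟨x, ⟨fun v c t c' t' hv hv' => ?_, fun _ => hlen, fun v c t _ hv => ?_⟩, fun _ => rfl⟩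
    · have hstep := hz v
      rw [Option.some.inj hv, Option.some.inj hv'] at hstep
      exact hstep.2
    · cases hv

theorem SPath.EndsAt.update (h : ρ.EndsAt c₀ t)
    (hc : Relation.ReflTransGen SyncStep (ρ.toFun t) c) :
    SPath.EndsAt c₀ ⟨ρ.len, Function.update ρ.toFun t c⟩ t := by
  refine ⟨h.1, ?_⟩
  simp only [Function.update_self]
  refine (reflTransGen_stepAlong_congr h.2 fun s hs => Function.update_of_ne hs.ne _ _).trans ?_
  exact Relation.ReflTransGen.lift (fun c => (c, t)) (fun _ _ => SyncStep.stepAlong) _ _ hc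

theorem SPath.IsInfiniteFrom.of_syncStep_chain {z : ℕ → Config A n} (hlen : ρ.len = t)
    (hrun : Relation.ReflTransGen (StepAlong ρ.toFun) (c₀, 0) (z 0, t))
    (hz : ∀ v, SyncStep (z v) (z (v + 1))) : ρ.IsInfiniteFrom c₀ := by
  obtain ⟨z', m, h0, hz', hm⟩ := exists_infinite_chain_of_reflTransGen
    (z := fun v => (z v, t)) hrun fun v => (hz v).stepAlong
  have time_mono : Monotone fun v => ((z' v).2 : ℝ≥0∞) :=
    monotone_nat_of_le_succ fun v => ENNReal.coe_le_coe.2 (hz' v).1.time_le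
  refine SPath.isInfiniteFrom_iff.2 ⟨z', h0, hz', hlen.trans ?_⟩
  simp only [← time_mono.iSup_nat_add m, hm, ciSup_const]

theorem SPath.isInfiniteFrom_of_stutter {z : ℕ → Config A n × NNReal} (h0 : z 0 = (c₀, 0))
    (hz : ∀ v, StepAlong ρ.toFun (z v) (z (v + 1)) ∨ z (v + 1) = z v)
    (hinf : {v | StepAlong ρ.toFun (z v) (z (v + 1))}.Infinite)
    (hlen : ρ.len = ⨆ v, ((z v).2 : ℝ≥0∞)) : ρ.IsInfiniteFrom c₀ := by
  obtain ⟨hzero, hsucc⟩ := apply_nth_of_stutter hinf fun v hv => (hz v).resolve_left hv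
  have time_mono : Monotone fun v => ((z v).2 : ℝ≥0∞) := monotone_nat_of_le_succ fun v =>
    ENNReal.coe_le_coe.2 ((hz v).elim (fun h => h.1.time_le) fun h => h ▸ le_rfl)
  refine SPath.isInfiniteFrom_iff.2 ⟨fun w => z (Nat.nth _ w), hzero.trans h0, fun w => ?_,
    hlen.trans (time_mono.iSup_comp_tendsto_atTop (Nat.nth_strictMono hinf).tendsto_atTop).symm⟩
  simpa only [hsucc] using Nat.nth_mem_of_infinite hinf w

end Runs

section MapSignal

variable {A : ConjPNTA k} {n : Fin k → ℕ} {k' : ℕ} {A' : ConjPNTA k'} {n' : Fin k' → ℕ}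

/-- The s-path obtained by applying `F` to the configuration at every time. -/
def SPath.map (F : Config A n → Config A' n') (ρ : SPath A n) : SPath A' n' where
  len := ρ.len
  toFun := F ∘ ρ.toFun

theorem satIMTL_map {α : Type} {val : α → Config A n → Prop} {val' : α → Config A' n' → Prop}
    {F : Config A n → Config A' n'} (hF : ∀ a c, val' a (F c) ↔ val a c) (Φ : IMTL α)
    (ρ : SPath A n) : satIMTL val' Φ (ρ.map F) ↔ satIMTL val Φ ρ := by
  induction Φ generalizing ρ with
  | tt => exact Iff.rfl
  | atom a => exact hF a _
  | and φ ψ ihφ ihψ => exact and_congr (ihφ ρ) (ihψ ρ)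
  | not φ ih => exact not_congr (ih ρ)
  | untl op q φ ψ ihφ ihψ =>
    exact exists_congr fun t' => and_congr_right fun _ => and_congr_right fun _ =>
      and_congr (ihψ (ρ.suffix t')) (forall₂_congr fun t _ => ihφ (ρ.suffix t))

end MapSignal

section Extend

variable {A : ConjPNTA k} {n n' : Fin k → ℕ} {p q : Config A n' × NNReal} {t : NNReal}

open Config

/-- The s-path of the larger network in which the instances dropped by `f` idle forever. -/
noncomputable def SPath.extend (f : InstanceEmbedding n' n) (ρ : SPath A n') : SPath A n where
  len := ρ.len
  toFun s := overlay f (ρ.toFun s) (idle A n s)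

variable {f : InstanceEmbedding n' n} {ρ : SPath A n'}

theorem SPath.map_restrict_extend : (ρ.extend f).map (restrict f) = ρ :=
  congrArg (SPath.mk ρ.len) (funext fun _ => restrict_overlay)

theorem StepAlong.extend (h : StepAlong ρ.toFun p q) :
    StepAlong (ρ.extend f).toFun (overlay f p.1 (idle A n p.2), p.2)
      (overlay f q.1 (idle A n q.2), q.2) := by
  refine ⟨h.1.overlay_idle, fun s hs hs' => ?_⟩
  have hidle := advances_idle (A := A) (n := n) (t := p.2) (d := s - p.2)
  rw [add_tsub_cancel_of_le hs] at hidle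
  exact (h.2 s hs hs').overlay hidle

theorem reflTransGen_stepAlong_extend (h : Relation.ReflTransGen (StepAlong ρ.toFun)
    (initConfig A n', 0) p) :
    Relation.ReflTransGen (StepAlong (ρ.extend f).toFun) (initConfig A n, 0)
      (overlay f p.1 (idle A n p.2), p.2) := by
  have hrun := Relation.ReflTransGen.lift (p := StepAlong (ρ.extend f).toFun)
    (fun p => (overlay f p.1 (idle A n p.2), p.2)) (fun _ _ => StepAlong.extend) _ _ h
  simpa only [Function.onFun, overlay_init_idle_zero] using hrun

theorem SPath.EndsAt.extend (h : ρ.EndsAt (initConfig A n') t) :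
    (ρ.extend f).EndsAt (initConfig A n) t :=
  ⟨h.1, reflTransGen_stepAlong_extend h.2⟩

theorem SPath.IsInfiniteFrom.extend (h : ρ.IsInfiniteFrom (initConfig A n')) :
    (ρ.extend f).IsInfiniteFrom (initConfig A n) := by
  obtain ⟨z, h0, hz, hlen⟩ := SPath.isInfiniteFrom_iff.1 h
  refine SPath.isInfiniteFrom_iff.2
    ⟨fun v => (overlay f (z v).1 (idle A n (z v).2), (z v).2), ?_, fun v => (hz v).extend, hlen⟩
  simp only [h0, overlay_init_idle_zero]

-- A deadlock of the small network need not be one of the large network, where the idle instances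
-- may still fire. They can only do so without delay: either they come to rest in a deadlock, or
-- they go on forever at the time of the deadlock.
theorem SPath.IsDeadlockedFrom.exists_map_restrict_eq (f : InstanceEmbedding n' n)
    (h : ρ.IsDeadlockedFrom (initConfig A n')) :
    ∃ ρ' : SPath A n, ρ'.map (restrict f) = ρ ∧
      (ρ'.IsInfiniteFrom (initConfig A n) ∨ ρ'.IsDeadlockedFrom (initConfig A n)) := by
  obtain ⟨t, hends, hstuck⟩ := SPath.isDeadlockedFrom_iff.1 h
  have restrict_eq : ∀ {b}, Relation.ReflTransGen SyncStep ((ρ.extend f).toFun t) b →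
      b.restrict f = ρ.toFun t := by
    intro b hb
    induction hb with
    | refl => exact restrict_overlay
    | tail _ hstep ih =>
      rw [← ih] at hstuck ⊢
      exact hstuck.restrict_eq_of_syncStep hstep
  obtain ⟨b, hb, hterminal⟩ | ⟨z, h0, hz⟩ :=
    exists_terminal_or_infinite_chain SyncStep ((ρ.extend f).toFun t)
  · refine ⟨⟨ρ.len, Function.update (ρ.extend f).toFun t b⟩, ?_, .inr ?_⟩
    · refine Eq.trans ?_ (map_restrict_extend (f := f))
      simp only [SPath.map, Function.comp_update, restrict_eq hb, SPath.mk.injEq]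
      exact ⟨rfl, Function.update_eq_self_iff.2 restrict_overlay.symm⟩
    · refine SPath.isDeadlockedFrom_iff.2 ⟨t, hends.extend.update hb, ?_⟩
      rw [← restrict_eq hb] at hstuck
      simpa using hstuck.of_restrict hterminal
  · exact ⟨ρ.extend f, map_restrict_extend, .inl
      (.of_syncStep_chain hends.1 (h0 ▸ hends.extend.2) hz)⟩

end Extend

section Truncate

variable {A : ConjPNTA k} {n n' : Fin k → ℕ} {c₀ : Config A n} {ρ : SPath A n} {t : NNReal}

open Config

theorem StepAlong.restrict_or_eq (f : InstanceEmbedding n' n) {g : NNReal → Config A n}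
    {p q : Config A n × NNReal} (h : StepAlong g p q) :
    StepAlong (restrict f ∘ g) (p.1.restrict f, p.2) (q.1.restrict f, q.2) ∨
      (q.1.restrict f, q.2) = (p.1.restrict f, p.2) :=
  (h.1.restrict_or_eq f).imp (fun hstep => ⟨hstep, fun s hs hs' => (h.2 s hs hs').restrict⟩)
    fun heq => Prod.ext heq.1 heq.2

theorem SPath.EndsAt.map_restrict (f : InstanceEmbedding n' n) (h : ρ.EndsAt c₀ t) :
    (ρ.map (restrict f)).EndsAt (c₀.restrict f) t := by
  refine ⟨h.1, Relation.ReflTransGen.lift' (fun p => (p.1.restrict f, p.2)) ?_ _ _ h.2⟩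
  intro p q hpq
  obtain hstep | heq := hpq.restrict_or_eq f
  · exact .single hstep
  · simp only [Function.onFun, heq, Relation.ReflTransGen.refl]

open Finset in
theorem SPath.IsInfiniteFrom.exists_finset_map_restrict (h : ρ.IsInfiniteFrom c₀) :
    ∃ T : ∀ h, Finset (Fin (n h)), (∀ h, #(T h) ≤ 1) ∧
      ∀ {n'} (f : InstanceEmbedding n' n), (∀ h, ↑(T h) ⊆ Set.range (f h)) →
        (ρ.map (restrict f)).IsInfiniteFrom (c₀.restrict f) := by
  classical
  obtain ⟨z, h0, hz, hlen⟩ := SPath.isInfiniteFrom_iff.1 h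
  choose mover hmover using fun v => (hz v).1.exists_mover
  obtain ⟨o, ho⟩ := Finite.exists_infinite_fiber mover
  refine ⟨fun h => {j | o = some ⟨h, j⟩}, fun h => ?_, fun {n'} f hf => ?_⟩
  · refine card_le_one.2 fun j hj j' hj' => ?_
    simp only [mem_filter, mem_univ, true_and] at hj hj'
    simpa using hj.symm.trans hj'
  refine SPath.isInfiniteFrom_of_stutter (z := fun v => ((z v).1.restrict f, (z v).2))
    (by simp only [h0]) (fun v => (hz v).restrict_or_eq f) ?_ hlen
  refine (Set.infinite_coe_iff.1 ho).mono fun v hv => ?_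
  refine ⟨hmover v f fun h j hj => hf h ?_, fun s hs hs' => ((hz v).2 s hs hs').restrict⟩
  simpa using hv.symm.trans hj

open Finset in
theorem SPath.IsDeadlockedFrom.exists_finset_map_restrict (h : ρ.IsDeadlockedFrom c₀) :
    ∃ T : ∀ h, Finset (Fin (n h)), (∀ h, #(T h) ≤ 2 * A.size h) ∧
      ∀ {n'} (f : InstanceEmbedding n' n), (∀ h, ↑(T h) ⊆ Set.range (f h)) →
        (ρ.map (restrict f)).IsDeadlockedFrom (c₀.restrict f) := by
  obtain ⟨t, hends, hstuck⟩ := SPath.isDeadlockedFrom_iff.1 h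
  obtain ⟨T, hcard, hT⟩ := hstuck.exists_finset_restrict
  exact ⟨T, hcard, fun f hf =>
    SPath.isDeadlockedFrom_iff.2 ⟨t, hends.map_restrict f, hT f hf⟩⟩

end Truncate

section Truncation

variable {A : ConjPNTA k} {n n' : Fin k → ℕ}

open Config

/-- The s-paths from `c₀` over which the path quantifier ranges. -/
def PathQ.Admits (Q : PathQ) (c₀ : Config A n) (ρ : SPath A n) : Prop :=
  match Q with
  | .A | .E => ρ.IsInfiniteFrom c₀ ∨ ρ.IsDeadlockedFrom c₀
  | .Ainf | .Einf => ρ.IsInfiniteFrom c₀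
  | .Afin | .Efin => ρ.IsFiniteFrom c₀

/-- The number of instances of template `h` that a truncation has to retain so that every s-path
over which `Q` ranges is mapped to one over which `Q` ranges. -/
def retentionBound (A : ConjPNTA k) (Q : PathQ) (h : Fin k) : ℕ :=
  match Q with
  | .A | .E => 2 * A.size h
  | .Ainf | .Einf => 1
  | .Afin | .Efin => 0

/-- The cutoff for template `h` with respect to formulae that track one instance of template `l`:
it leaves room for the instances to be retained and for the tracked instance. -/
def truncationCutoff (A : ConjPNTA k) (Q : PathQ) (l h : Fin k) : ℕ :=
  retentionBound A Q h + if h = l then 1 else 0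

/-- The valuation that interprets the atoms of a formula over instance `i` of template `l`. -/
def stateVal (A : ConjPNTA k) {n : Fin k → ℕ} {l : Fin k} (i : Fin (n l)) :
    A.State l → Config A n → Prop :=
  fun p c => c.st l i = p

theorem PathQ.Admits.exists_map_restrict_eq (f : InstanceEmbedding n' n) {Q : PathQ}
    {ρ : SPath A n'} (h : Q.Admits (initConfig A n') ρ) :
    ∃ ρ' : SPath A n, Q.Admits (initConfig A n) ρ' ∧ ρ'.map (restrict f) = ρ := by
  cases Q with
  | A | E =>
    obtain hinf | hdead := h
    · exact ⟨ρ.extend f, .inl hinf.extend, SPath.map_restrict_extend⟩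
    · obtain ⟨ρ', heq, hρ'⟩ := hdead.exists_map_restrict_eq f
      exact ⟨ρ', hρ', heq⟩
  | Ainf | Einf => exact ⟨ρ.extend f, SPath.IsInfiniteFrom.extend h, SPath.map_restrict_extend⟩
  | Afin | Efin =>
    obtain ⟨t, ht⟩ := SPath.isFiniteFrom_iff.1 h
    exact ⟨ρ.extend f, SPath.isFiniteFrom_iff.2 ⟨t, ht.extend⟩, SPath.map_restrict_extend⟩

open Finset in
theorem PathQ.Admits.exists_finset_map_restrict {Q : PathQ} {ρ : SPath A n} {c₀ : Config A n}
    (h : Q.Admits c₀ ρ) :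
    ∃ T : ∀ h, Finset (Fin (n h)), (∀ h, #(T h) ≤ retentionBound A Q h) ∧
      ∀ {n'} (f : InstanceEmbedding n' n), (∀ h, ↑(T h) ⊆ Set.range (f h)) →
        Q.Admits (c₀.restrict f) (ρ.map (restrict f)) := by
  cases Q with
  | A | E =>
    obtain hinf | hdead := h
    · obtain ⟨T, hcard, hT⟩ := hinf.exists_finset_map_restrict
      exact ⟨T, fun h => (hcard h).trans (Nat.mul_pos two_pos (A.size_pos h)),
        fun f hf => .inl (hT f hf)⟩
    · obtain ⟨T, hcard, hT⟩ := hdead.exists_finset_map_restrict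
      exact ⟨T, hcard, fun f hf => .inr (hT f hf)⟩
  | Ainf | Einf => exact SPath.IsInfiniteFrom.exists_finset_map_restrict h
  | Afin | Efin =>
    obtain ⟨t, ht⟩ := SPath.isFiniteFrom_iff.1 h
    exact ⟨fun _ => ∅, fun _ => le_rfl, fun f _ => SPath.isFiniteFrom_iff.2 ⟨t, ht.map_restrict f⟩⟩

theorem satIMTL_stateVal_map_restrict {f : InstanceEmbedding n' n} {l : Fin k} {i' : Fin (n' l)}
    (Φ : IMTL (A.State l)) (ρ : SPath A n) :
    satIMTL (stateVal A i') Φ (ρ.map (restrict f)) ↔ satIMTL (stateVal A (f l i')) Φ ρ :=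
  satIMTL_map (fun _ _ => Iff.rfl) Φ ρ

theorem exists_admits_satIMTL_iff (Q : PathQ) {l : Fin k} (i : Fin (n l)) (i' : Fin (n' l))
    (hn' : ∀ h, n' h ∈ Set.Icc (min (n h) (truncationCutoff A Q l h)) (n h))
    (Φ : IMTL (A.State l)) :
    (∃ ρ, Q.Admits (initConfig A n) ρ ∧ satIMTL (stateVal A i) Φ ρ) ↔
      ∃ ρ, Q.Admits (initConfig A n') ρ ∧ satIMTL (stateVal A i') Φ ρ := by
  constructor
  · rintro ⟨ρ, hρ, hsat⟩
    obtain ⟨T, hcard, hT⟩ := hρ.exists_finset_map_restrict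
    obtain ⟨f, rfl, hf⟩ := exists_instanceEmbedding i i' (fun h => (hn' h).2) (T := T) fun h =>
      (min_le_min_left _ (Nat.add_le_add_right (hcard h) _)).trans (hn' h).1
    exact ⟨_, hT f hf, (satIMTL_stateVal_map_restrict Φ ρ).2 hsat⟩
  · rintro ⟨ρ, hρ, hsat⟩
    obtain ⟨f, rfl, -⟩ := exists_instanceEmbedding i i' (fun h => (hn' h).2) (T := fun _ => ∅)
      fun h => (min_le_min_left _ (Nat.add_le_add_right (Nat.zero_le _) _)).trans (hn' h).1
    obtain ⟨ρ', hρ', rfl⟩ := hρ.exists_map_restrict_eq f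
    exact ⟨ρ', hρ', (satIMTL_stateVal_map_restrict Φ ρ').1 hsat⟩

theorem truncation_first_step_general (A : ConjPNTA k) (Q : PathQ) {l : Fin k} (i : Fin (n l))
    (i' : Fin (n' l)) (hn' : ∀ h, n' h ∈ Set.Icc (min (n h) (truncationCutoff A Q l h)) (n h))
    (Φ : IMTL (A.State l)) :
    SatQ A n (stateVal A i) Q Φ ↔ SatQ A n' (stateVal A i') Q Φ := by
  have hE := exists_admits_satIMTL_iff Q i i' hn'
  cases Q with
  | E | Einf | Efin => exact hE Φ
  | A | Ainf | Afin =>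
    simpa only [SatQ, satIMTL, PathQ.Admits, not_exists, not_and, not_not] using
      not_congr (hE (.not Φ))

end Truncation

theorem truncation_first_step (A : ConjPNTA 2) (Φ : IMTL (A.State 1))
    (Q : PathQ) (hQ : Q = PathQ.E ∨ Q = PathQ.Einf ∨ Q = PathQ.Efin)
    (n₁ n₂ : ℕ) (h₁ : 1 ≤ n₁) (h₂ : 1 ≤ n₂) :
    SatQ A (two n₁ n₂) (valFirst A (two n₁ n₂) 1 h₂) Q Φ ↔
      SatQ A (two n₁ (min n₂ (cutoffTracked A Q)))
        (valFirst A (two n₁ (min n₂ (cutoffTracked A Q))) 1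
          (lt_min h₂ (cutoffTracked_pos A Q))) Q Φ := by
  have hn' : ∀ h, two n₁ (min n₂ (cutoffTracked A Q)) h ∈
      Set.Icc (min (two n₁ n₂ h) (truncationCutoff A Q 1 h)) (two n₁ n₂ h) := by
    rcases hQ with rfl | rfl | rfl <;>
      exact Fin.forall_fin_two.2 ⟨⟨min_le_left _ _, le_rfl⟩, ⟨le_rfl, min_le_left _ _⟩⟩
  exact truncation_first_step_general A Q (l := 1) ⟨0, h₂⟩
    ⟨0, lt_min h₂ (cutoffTracked_pos A Q)⟩ hn' Φ

end PNTA
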